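/- Let $d \geq 1$ and $d_1, d_2, d_3 \geq 0$ with $d_1+d_2+d_3 \leq d-1$. Let $A_4 \in \mathbb{Z}^{d\times d}$ be the identity except one row with diagonal entry $4$ containing $d_1$ ones, $d_2$ twos, and $d_3$ threes. Then the $\delta$-polynomial of $\mathcal{P}(A_4)$ is $1 + t^{k_1} + t^{k_2} + t^{k_3}$ where $k_1 = 1 - \lfloor(1-d_1-2d_2-3d_3)/4\rfloor$, $k_2 = 1 - \lfloor(1-d_1-d_3)/2\rfloor$, and $k_3 = 1 - \lfloor(3-3d_1-2d_2-d_3)/4\rfloor$. -/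

import Mathlib

open Set Pointwise

/-- The number of lattice points in the `n`-th dilation of `P ⊆ ℝ^N`. -/
noncomputable def ehr {N : ℕ} (P : Set (Fin N → ℝ)) (n : ℕ) : ℕ :=
  Set.ncard {x : Fin N → ℤ | (fun i => (x i : ℝ)) ∈ (n : ℝ) • P}

/-- The `i`-th coefficient of `(1-λ)^(d+1) * (1 + ∑_{n ≥ 1} i(P,n) λ^n)`,
i.e. the `i`-th entry of the δ-vector of a `d`-dimensional integral polytope. -/
noncomputable def deltaVec {N : ℕ} (P : Set (Fin N → ℝ)) (d i : ℕ) : ℤ :=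
  ∑ j ∈ Finset.range (i + 1),
    (-1 : ℤ) ^ (i - j) * (Nat.choose (d + 1) (i - j) : ℤ) * (ehr P j : ℤ)

/-- `P ⊆ ℝ^N` is an integral polytope of dimension `d`. -/
def IsIntegralPolytope {N : ℕ} (P : Set (Fin N → ℝ)) (d : ℕ) : Prop :=
  ∃ V : Finset (Fin N → ℤ), V.Nonempty ∧
    P = convexHull ℝ ((fun v i => ((v i : ℝ))) '' (V : Set (Fin N → ℤ))) ∧
    Module.finrank ℝ (vectorSpan ℝ P) = d

open Finset in
theorem card_biUnion_piAntidiag (d m : ℕ) :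
    #((Finset.range (m + 1)).biUnion (piAntidiag (univ : Finset (Fin d)))) = (d + m).choose d := by
  rw [card_biUnion]
  · have h (s : ℕ) : #(piAntidiag (univ : Finset (Fin d)) s) = d.multichoose s := by
      rw [← map_sym_eq_piAntidiag, card_map]
      simp [Finset.sym_univ, Sym.card_sym_eq_multichoose]
    simp_rw [h, Nat.sum_range_multichoose]
    rw [Nat.add_comm]
  · intro s _ t _ hst
    rw [Function.onFun, Finset.disjoint_left]
    intro y hs ht
    simp only [mem_piAntidiag] at hs ht
    exact hst (hs.1.symm.trans ht.1)

theorem mem_smul_convexHull_insert_zero {ι E : Type*} [Fintype ι] [AddCommGroup E] [Module ℝ E]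
    (v : ι → E) {n : ℝ} (hn : 0 ≤ n) (x : E) :
    x ∈ n • convexHull ℝ (insert 0 (range v)) ↔
      ∃ c : ι → ℝ, (∀ i, 0 ≤ c i) ∧ ∑ i, c i ≤ n ∧ ∑ i, c i • v i = x := by
  classical
  constructor
  · rintro ⟨y, hy, rfl⟩
    have hsub : convexHull ℝ (insert 0 (range v)) ⊆
        {y | ∃ c : ι → ℝ, (∀ i, 0 ≤ c i) ∧ ∑ i, c i ≤ 1 ∧ ∑ i, c i • v i = y} := by
      apply convexHull_min
      · rintro _ (rfl | ⟨i, rfl⟩)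
        · exact ⟨0, by simp⟩
        · refine ⟨Pi.single i 1, fun j => ?_, ?_, ?_⟩
          · by_cases h : j = i
            · subst h; simp
            · simp [h]
          · simp
          · simp [Pi.single_apply]
      · rintro _ ⟨c, hc, hc1, rfl⟩ _ ⟨e, he, he1, rfl⟩ s t hs ht hst
        refine ⟨s • c + t • e, fun i => ?_, ?_, ?_⟩
        · have := mul_nonneg hs (hc i)
          have := mul_nonneg ht (he i)
          simp only [Pi.add_apply, Pi.smul_apply, smul_eq_mul]
          positivity
        · simp only [Pi.add_apply, Pi.smul_apply, smul_eq_mul, Finset.sum_add_distrib,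
            ← Finset.mul_sum]
          nlinarith
        · simp only [Pi.add_apply, Pi.smul_apply, smul_eq_mul, add_smul, mul_smul,
            Finset.sum_add_distrib, Finset.smul_sum]
    obtain ⟨c, hc, hc1, rfl⟩ := hsub hy
    refine ⟨n • c, fun i => mul_nonneg hn (hc i), ?_, ?_⟩
    · simp only [Pi.smul_apply, smul_eq_mul, ← Finset.mul_sum]
      nlinarith
    · simp [mul_smul, Finset.smul_sum]
  · rintro ⟨c, hc, hcn, rfl⟩
    rcases hn.eq_or_lt with rfl | hn
    · have h0 : ∀ i, c i = 0 := fun i =>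
        (Finset.sum_eq_zero_iff_of_nonneg fun i _ => hc i).1
          (le_antisymm hcn (Finset.sum_nonneg fun i _ => hc i)) i (Finset.mem_univ i)
      exact ⟨0, subset_convexHull ℝ _ (mem_insert _ _), by simp [h0]⟩
    · refine ⟨∑ i, (c i / n) • v i, ?_, ?_⟩
      · have key := (convex_convexHull ℝ (insert 0 (range v))).sum_mem
          (t := (Finset.univ : Finset (Option ι)))
          (w := fun o => o.elim (1 - ∑ i, c i / n) fun i => c i / n)
          (z := fun o => o.elim 0 v) ?_ ?_ ?_
        · simpa [Fintype.sum_option] using key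
        · rintro (_ | i) -
          · simp only [Option.elim, ← Finset.sum_div, sub_nonneg]
            exact (div_le_one hn).2 hcn
          · exact div_nonneg (hc i) hn.le
        · simp [Fintype.sum_option]
        · rintro (_ | i) -
          · exact subset_convexHull ℝ _ (mem_insert _ _)
          · exact subset_convexHull ℝ _ (mem_insert_of_mem _ ⟨i, rfl⟩)
      · simp only [Finset.smul_sum, smul_smul]
        exact Finset.sum_congr rfl fun i _ => by rw [mul_div_cancel₀ _ hn.ne']

theorem PowerSeries.coeff_one_sub_X_pow {R : Type*} [CommRing R] (n i : ℕ) :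
    coeff i ((1 - X : PowerSeries R) ^ n) = (-1) ^ i * (n.choose i : R) := by
  have h : (1 - X : PowerSeries R) = rescale (-1) ((1 + Polynomial.X : Polynomial R) :
      PowerSeries R) := by
    simp [sub_eq_add_neg]
  rw [h, ← map_pow, coeff_rescale, ← Polynomial.coe_pow, Polynomial.coeff_coe,
    Polynomial.coeff_one_add_X_pow]

open PowerSeries in
theorem deltaVec_eq_coeff {N : ℕ} (P : Set (Fin N → ℝ)) (d i : ℕ) :
    deltaVec P d i = coeff i ((mk fun n => (ehr P n : ℤ)) * (1 - X) ^ (d + 1)) := by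
  simp only [coeff_mul, coeff_mk, coeff_one_sub_X_pow,
    Finset.Nat.sum_antidiagonal_eq_sum_range_succ_mk, deltaVec]
  exact Finset.sum_congr rfl fun j _ => mul_comm _ _

open PowerSeries in
theorem deltaVec_eq_of_ehr {N : ℕ} {ι : Type*} (s : Finset ι) (K : ι → ℕ) (P : Set (Fin N → ℝ))
    (d : ℕ)
    (h : ∀ n, ehr P n = ∑ r ∈ s, if K r ≤ n then (d + (n - K r)).choose d else 0) (i : ℕ) :
    deltaVec P d i = ∑ r ∈ s, if i = K r then 1 else 0 := by
  have hmk : (mk fun n => (ehr P n : ℤ)) =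
      ∑ r ∈ s, X ^ K r * (mk fun n => ((d + n).choose d : ℤ)) := by
    ext n
    simp [h, coeff_X_pow_mul']
  rw [deltaVec_eq_coeff, hmk, Finset.sum_mul, map_sum]
  refine Finset.sum_congr rfl fun r _ => ?_
  rw [mul_assoc, mk_add_choose_mul_one_sub_pow_eq_one, mul_one, coeff_X_pow]

/-- The lattice simplex spanned by the origin and the rows of the matrix that is the identity
except for row `k`, which has diagonal entry `D` and the entries of `b` elsewhere. -/
def rowSimplex {d : ℕ} (k : Fin d) (b : Fin d → ℤ) (D : ℕ) : Set (Fin d → ℝ) :=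
  convexHull ℝ (insert 0 (range fun i j =>
    (((if i = k then (if j = k then (D : ℤ) else b j) else if i = j then 1 else 0 : ℤ)) : ℝ)))

theorem intCast_mem_smul_rowSimplex {d : ℕ} (k : Fin d) (b : Fin d → ℤ) {D : ℕ} (hD : 0 < D)
    (n : ℕ) (x : Fin d → ℤ) :
    (fun i => (x i : ℝ)) ∈ (n : ℝ) • rowSimplex k b D ↔
      0 ≤ x k ∧ (∀ j ≠ k, b j * x k ≤ D * x j) ∧
        x k + ∑ j ∈ Finset.univ.erase k, (D * x j - b j * x k) ≤ D * n := by
  have hD' : (0 : ℝ) < D := by exact_mod_cast hD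
  rw [rowSimplex, mem_smul_convexHull_insert_zero _ n.cast_nonneg]
  have hx (c : Fin d → ℝ) : ∑ i, c i • (fun j => (((if i = k then (if j = k then (D : ℤ) else b j)
      else if i = j then 1 else 0 : ℤ)) : ℝ)) = (fun i => (x i : ℝ)) ↔
      c k * D = x k ∧ ∀ j ≠ k, c j + c k * b j = x j := by
    have hc (j : Fin d) : (∑ i, c i • (fun j => (((if i = k then (if j = k then (D : ℤ) else b j)
        else if i = j then 1 else 0 : ℤ)) : ℝ))) j =
        if j = k then c k * D else c j + c k * b j := by
      rw [Finset.sum_apply, ← Finset.add_sum_erase _ _ (Finset.mem_univ k)]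
      have : ∀ i ∈ Finset.univ.erase k, (c i • (fun j => (((if i = k then
          (if j = k then (D : ℤ) else b j) else if i = j then 1 else 0 : ℤ)) : ℝ))) j =
          if i = j then c i else 0 := by
        intro i hi
        simp [Finset.ne_of_mem_erase hi]
      rw [Finset.sum_congr rfl this, Finset.sum_ite_eq']
      by_cases hj : j = k
      · simp [hj]
      · simp [hj, add_comm]
    constructor
    · intro h
      refine ⟨?_, fun j hj => ?_⟩
      · simpa using (hc k).symm.trans (congrFun h k)
      · simpa [hj] using (hc j).symm.trans (congrFun h j)
    · rintro ⟨h1, h2⟩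
      funext j
      rw [hc]
      split_ifs with hj
      · rw [hj, h1]
      · exact h2 j hj
  simp only [hx]
  constructor
  · rintro ⟨c, hc, hcn, hk, hj⟩
    have hmul : ∀ j ≠ k, (D : ℝ) * x j - b j * x k = D * c j := fun j hjk => by
      rw [← hk, ← hj j hjk]; ring
    refine ⟨?_, fun j hjk => ?_, ?_⟩
    · have : (0 : ℝ) ≤ x k := hk ▸ mul_nonneg (hc k) hD'.le
      exact_mod_cast this
    · have : (b j : ℝ) * x k ≤ D * x j := by
        rw [← sub_nonneg, hmul j hjk]
        exact mul_nonneg hD'.le (hc j)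
      exact_mod_cast this
    · have : (x k : ℝ) + ∑ j ∈ Finset.univ.erase k, ((D : ℝ) * x j - b j * x k) ≤ D * n := by
        rw [Finset.sum_congr rfl fun j hj' => hmul j (Finset.ne_of_mem_erase hj'),
          ← Finset.mul_sum, ← hk, mul_comm (c k), ← mul_add,
          Finset.add_sum_erase _ _ (Finset.mem_univ k)]
        exact mul_le_mul_of_nonneg_left hcn hD'.le
      exact_mod_cast this
  · rintro ⟨h0, hj, hn⟩
    have h0' : (0 : ℝ) ≤ x k := by exact_mod_cast h0
    have hn' : (x k : ℝ) + ∑ j ∈ Finset.univ.erase k, ((D : ℝ) * x j - b j * x k) ≤ D * n := by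
      exact_mod_cast hn
    refine ⟨fun j => if j = k then x k / D else (D * x j - b j * x k) / D, fun j => ?_, ?_, ?_,
      fun j hjk => ?_⟩
    · dsimp only
      split_ifs with hjk
      · positivity
      · have : (b j : ℝ) * x k ≤ D * x j := by exact_mod_cast hj j hjk
        exact div_nonneg (sub_nonneg.2 this) hD'.le
    · rw [← Finset.add_sum_erase _ _ (Finset.mem_univ k), if_pos rfl,
        Finset.sum_congr rfl fun j hj' => if_neg (Finset.ne_of_mem_erase hj'), ← Finset.sum_div,
        ← add_div, div_le_iff₀ hD']
      linarith
    · simp [hD'.ne']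
    · simp only [hjk, if_true, if_false]
      field_simp
      ring

/-- The height of the lattice point with `k`-th coordinate `r` in the fundamental parallelepiped
of `rowSimplex k b D`. -/
def boxHeight {d : ℕ} (k : Fin d) (b : Fin d → ℤ) (D r : ℕ) : ℕ :=
  ((r + ∑ j ∈ Finset.univ.erase k, (-(b j * r)) % D + (D - 1)) / D : ℤ).toNat

theorem add_boxHeight_le_iff {d : ℕ} (k : Fin d) (b : Fin d → ℤ) {D : ℕ} (hD : 0 < D) (r s n : ℕ) :
    s + boxHeight k b D r ≤ n ↔
      (D * s + (r + ∑ j ∈ Finset.univ.erase k, (-(b j * r)) % D) : ℤ) ≤ D * n := by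
  have hD' : (0 : ℤ) < D := by exact_mod_cast hD
  have hF : (0 : ℤ) ≤ ∑ j ∈ Finset.univ.erase k, (-(b j * r)) % D :=
    Finset.sum_nonneg fun j _ => Int.emod_nonneg _ hD'.ne'
  rw [boxHeight]
  set F : ℤ := r + ∑ j ∈ Finset.univ.erase k, (-(b j * r)) % D with hFdef
  have h0 : 0 ≤ (F + (D - 1)) / D := Int.ediv_nonneg (by omega) hD'.le
  have : s + ((F + (D - 1)) / D).toNat ≤ n ↔ (F + (D - 1)) / D < n - s + 1 := by omega
  rw [this, Int.ediv_lt_iff_lt_mul hD']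
  have : ((n : ℤ) - s + 1) * D = D * n - D * s + D := by ring
  omega

theorem boxHeight_le {d : ℕ} (k : Fin d) (b : Fin d → ℤ) {D r : ℕ} (hr : r < D) :
    boxHeight k b D r ≤ d := by
  have hD : 0 < D := by omega
  have h := (add_boxHeight_le_iff k b hD r 0 d).2 ?_
  · simpa using h
  have hsum : ∑ j ∈ Finset.univ.erase k, (-(b j * r)) % (D : ℤ) ≤
      ∑ _j ∈ Finset.univ.erase k, (D : ℤ) :=
    Finset.sum_le_sum fun j _ => (Int.emod_lt_of_pos _ (by exact_mod_cast hD)).le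
  have hsplit : (D : ℤ) + ∑ _j ∈ Finset.univ.erase k, (D : ℤ) = D * d := by
    rw [Finset.add_sum_erase Finset.univ (fun _ => (D : ℤ)) (Finset.mem_univ k)]
    simp [mul_comm]
  push_cast
  omega

/-- The lattice point with box component `r` and coordinates `y` with respect to the generators
of the cone over `rowSimplex k b D`. -/
def conePoint {d : ℕ} (k : Fin d) (b : Fin d → ℤ) (D r : ℕ) (y : Fin d → ℕ) (j : Fin d) : ℤ :=
  if j = k then D * y k + r else y j + b j * y k - (-(b j * r)) / D

theorem mul_conePoint_sub {d : ℕ} (k : Fin d) (b : Fin d → ℤ) (D r : ℕ) (y : Fin d → ℕ)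
    {j : Fin d} (hj : j ≠ k) :
    D * conePoint k b D r y j - b j * conePoint k b D r y k =
      D * y j + (-(b j * r)) % D := by
  have h := Int.mul_ediv_add_emod (-(b j * r)) D
  simp only [conePoint, if_neg hj, if_true]
  linear_combination (-1 : ℤ) * h

theorem conePoint_mem_smul_rowSimplex {d : ℕ} (k : Fin d) (b : Fin d → ℤ) {D : ℕ} (hD : 0 < D)
    (n r : ℕ) (y : Fin d → ℕ) :
    (fun i => (conePoint k b D r y i : ℝ)) ∈ (n : ℝ) • rowSimplex k b D ↔
      ∑ j, y j + boxHeight k b D r ≤ n := by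
  rw [intCast_mem_smul_rowSimplex k b hD, add_boxHeight_le_iff k b hD]
  have hsum : conePoint k b D r y k + ∑ j ∈ Finset.univ.erase k,
      (D * conePoint k b D r y j - b j * conePoint k b D r y k) =
      D * (∑ j, y j : ℕ) + (r + ∑ j ∈ Finset.univ.erase k, (-(b j * r)) % D) := by
    rw [Finset.sum_congr rfl fun j hj => mul_conePoint_sub k b D r y (Finset.ne_of_mem_erase hj),
      Finset.sum_add_distrib, ← Finset.mul_sum, ← Finset.add_sum_erase _ _ (Finset.mem_univ k)]
    simp only [conePoint, if_true]
    push_cast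
    ring
  rw [hsum]
  refine ⟨fun h => h.2.2, fun h => ⟨?_, fun j hj => ?_, h⟩⟩
  · simp only [conePoint, if_true]
    positivity
  · rw [← sub_nonneg, mul_conePoint_sub k b D r y hj]
    have := Int.emod_nonneg (-(b j * r)) (b := D) (by exact_mod_cast hD.ne')
    positivity

theorem conePoint_injective {d : ℕ} (k : Fin d) (b : Fin d → ℤ) {D r r' : ℕ} (hr : r < D)
    (hr' : r' < D) {y y' : Fin d → ℕ} (h : conePoint k b D r y = conePoint k b D r' y') :
    r = r' ∧ y = y' := by
  have hk := congrFun h k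
  simp only [conePoint, if_true] at hk
  have hk' : r + D * y k = r' + D * y' k := by
    zify
    linarith
  have hrr : r = r' := by
    simpa [Nat.mod_eq_of_lt hr, Nat.mod_eq_of_lt hr'] using congrArg (· % D) hk'
  subst hrr
  have hyk : y k = y' k := Nat.eq_of_mul_eq_mul_left (by omega) (Nat.add_left_cancel hk')
  refine ⟨rfl, funext fun j => ?_⟩
  by_cases hj : j = k
  · rw [hj, hyk]
  · have := congrFun h j
    simp only [conePoint, if_neg hj, hyk] at this
    omega

theorem exists_conePoint_eq {d : ℕ} (k : Fin d) (b : Fin d → ℤ) {D : ℕ} (hD : 0 < D)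
    (x : Fin d → ℤ) (hk : 0 ≤ x k) (hx : ∀ j ≠ k, b j * x k ≤ D * x j) :
    ∃ r < D, ∃ y, conePoint k b D r y = x := by
  have hD' : (0 : ℤ) < D := by exact_mod_cast hD
  obtain ⟨m, hm⟩ := Int.eq_ofNat_of_zero_le hk
  have hmd : (D : ℤ) * (m / D : ℕ) + (m % D : ℕ) = m := by exact_mod_cast Nat.div_add_mod m D
  refine ⟨m % D, Nat.mod_lt _ hD, fun j => if j = k then m / D else
    (x j - b j * (m / D : ℕ) + (-(b j * (m % D : ℕ))) / D).toNat, funext fun j => ?_⟩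
  by_cases hj : j = k
  · subst hj
    simp only [conePoint, if_true]
    rw [hm]
    exact hmd
  · have h0 : 0 ≤ x j - b j * (m / D : ℕ) + (-(b j * (m % D : ℕ))) / D := by
      rw [add_comm, ← Int.add_mul_ediv_left _ _ hD'.ne']
      refine Int.ediv_nonneg ?_ hD'.le
      have h := hx j hj
      rw [hm, ← hmd] at h
      linarith
    simp only [conePoint, if_true, if_neg hj]
    rw [Int.toNat_of_nonneg h0]
    ring

theorem ehr_rowSimplex {d : ℕ} (k : Fin d) (b : Fin d → ℤ) {D : ℕ} (hD : 0 < D) (n : ℕ) :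
    ehr (rowSimplex k b D) n = ∑ r ∈ Finset.range D,
      if boxHeight k b D r ≤ n then (d + (n - boxHeight k b D r)).choose d else 0 := by
  set S : Finset (Σ _ : ℕ, Fin d → ℕ) := (Finset.range D).sigma fun r =>
    if boxHeight k b D r ≤ n then
      (Finset.range (n - boxHeight k b D r + 1)).biUnion (Finset.piAntidiag Finset.univ)
    else ∅ with hS
  have hmem (r : ℕ) (y : Fin d → ℕ) :
      ⟨r, y⟩ ∈ S ↔ r < D ∧ Finset.univ.sum y + boxHeight k b D r ≤ n := by
    rw [hS, Finset.mem_sigma, Finset.mem_range]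
    refine and_congr_right fun _ => ?_
    dsimp only
    split_ifs with h
    · simp only [Finset.mem_biUnion, Finset.mem_range, Finset.mem_piAntidiag, Finset.mem_univ,
        implies_true, and_true, exists_eq_right']
      omega
    · simp only [Finset.notMem_empty, false_iff]
      omega
  have himage : {x : Fin d → ℤ | (fun i => (x i : ℝ)) ∈ (n : ℝ) • rowSimplex k b D} =
      (fun p : Σ _ : ℕ, Fin d → ℕ => conePoint k b D p.1 p.2) '' S := by
    ext x
    constructor
    · intro hx
      obtain ⟨hk, hj, -⟩ := (intCast_mem_smul_rowSimplex k b hD n x).1 hx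
      obtain ⟨r, hr, y, rfl⟩ := exists_conePoint_eq k b hD x hk hj
      exact ⟨⟨r, y⟩, (hmem r y).2 ⟨hr, (conePoint_mem_smul_rowSimplex k b hD n r y).1 hx⟩, rfl⟩
    · rintro ⟨⟨r, y⟩, hp, rfl⟩
      exact (conePoint_mem_smul_rowSimplex k b hD n r y).2 ((hmem r y).1 hp).2
  rw [ehr, himage, Set.InjOn.ncard_image, Set.ncard_coe_finset, hS, Finset.card_sigma]
  · refine Finset.sum_congr rfl fun r _ => ?_
    split_ifs
    · exact card_biUnion_piAntidiag _ _
    · rfl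
  · rintro ⟨r, y⟩ hp ⟨r', y'⟩ hp' h
    obtain ⟨rfl, rfl⟩ :=
      conePoint_injective k b ((hmem r y).1 hp).1 ((hmem r' y').1 hp').1 h
    rfl

theorem sum_deltaVec_rowSimplex {d : ℕ} (k : Fin d) (b : Fin d → ℤ) {D : ℕ} (hD : 0 < D) :
    ∑ i ∈ Finset.range (d + 1),
      Polynomial.C (deltaVec (rowSimplex k b D) d i) * Polynomial.X ^ i =
    ∑ r ∈ Finset.range D, Polynomial.X ^ boxHeight k b D r := by
  simp only [deltaVec_eq_of_ehr (Finset.range D) (boxHeight k b D) (rowSimplex k b D) d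
    (ehr_rowSimplex k b hD), map_sum, Finset.sum_mul]
  rw [Finset.sum_comm]
  refine Finset.sum_congr rfl fun r hr => ?_
  have hle := boxHeight_le k b (Finset.mem_range.1 hr)
  simp [apply_ite Polynomial.C, Nat.lt_succ_of_le hle]

theorem sum_erase_neg_mul_emod_four {d : ℕ} (k : Fin d) (a : Fin d → ℤ)
    (ha : ∀ ℓ : Fin d, ℓ < k → a ℓ = 0 ∨ a ℓ = 1 ∨ a ℓ = 2 ∨ a ℓ = 3) (r : ℤ) :
    ∑ j ∈ Finset.univ.erase k, (-((if j < k then a j else 0) * r)) % 4 =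
      (-r) % 4 * (Finset.univ.filter fun ℓ : Fin d => ℓ < k ∧ a ℓ = 1).card +
      (-(2 * r)) % 4 * (Finset.univ.filter fun ℓ : Fin d => ℓ < k ∧ a ℓ = 2).card +
      (-(3 * r)) % 4 * (Finset.univ.filter fun ℓ : Fin d => ℓ < k ∧ a ℓ = 3).card := by
  rw [Finset.sum_erase _ (by simp)]
  simp only [Finset.card_filter, Nat.cast_sum, Finset.mul_sum, ← Finset.sum_add_distrib]
  refine Finset.sum_congr rfl fun j _ => ?_
  by_cases hj : j < k
  · rcases ha j hj with h | h | h | h <;> simp [hj, h]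
  · simp [hj]

theorem stmt13 (d : ℕ) (hd : 1 ≤ d) (k : Fin d) (a : Fin d → ℤ)
    (ha : ∀ ℓ : Fin d, ℓ < k → a ℓ = 0 ∨ a ℓ = 1 ∨ a ℓ = 2 ∨ a ℓ = 3)
    (A : Matrix (Fin d) (Fin d) ℤ)
    (hA : A = Matrix.of fun i j =>
      if i = k then (if j = k then (4 : ℤ) else if j < k then a j else 0)
      else if i = j then 1 else 0)
    (d1 d2 d3 : ℕ)
    (hd1 : d1 = (Finset.univ.filter fun ℓ : Fin d => ℓ < k ∧ a ℓ = 1).card)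
    (hd2 : d2 = (Finset.univ.filter fun ℓ : Fin d => ℓ < k ∧ a ℓ = 2).card)
    (hd3 : d3 = (Finset.univ.filter fun ℓ : Fin d => ℓ < k ∧ a ℓ = 3).card)
    (P : Set (Fin d → ℝ))
    (hP : P = convexHull ℝ
      (insert (0 : Fin d → ℝ) (Set.range fun i j => (A i j : ℝ)))) :
    ∑ i ∈ Finset.range (d + 1), Polynomial.C (deltaVec P d i) * Polynomial.X ^ i
    = 1 + (Polynomial.X : Polynomial ℤ) ^
        ((1 - Int.fdiv (1 - (d1 : ℤ) - 2 * (d2 : ℤ) - 3 * (d3 : ℤ)) 4).toNat)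
        + (Polynomial.X : Polynomial ℤ) ^
        ((1 - Int.fdiv (1 - (d1 : ℤ) - (d3 : ℤ)) 2).toNat)
        + (Polynomial.X : Polynomial ℤ) ^
        ((1 - Int.fdiv (3 - 3 * (d1 : ℤ) - 2 * (d2 : ℤ) - (d3 : ℤ)) 4).toNat) := by
  have hP' : P = rowSimplex k (fun j => if j < k then a j else 0) 4 := by
    rw [hP, rowSimplex, hA]
    rfl
  have hheight (r : ℕ) : boxHeight k (fun j => if j < k then a j else 0) 4 r = _ :=
    congrArg (fun s : ℤ => ((r + s + 3) / 4).toNat) (sum_erase_neg_mul_emod_four k a ha r)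
  rw [← hd1, ← hd2, ← hd3] at hheight
  rw [hP', sum_deltaVec_rowSimplex k _ (by norm_num), Finset.sum_range_succ, Finset.sum_range_succ,
    Finset.sum_range_succ, Finset.sum_range_one]
  have h0 : boxHeight k (fun j => if j < k then a j else 0) 4 0 = 0 := by
    rw [hheight]
    simp
  have h1 : boxHeight k (fun j => if j < k then a j else 0) 4 1 =
      (1 - Int.fdiv (3 - 3 * (d1 : ℤ) - 2 * (d2 : ℤ) - (d3 : ℤ)) 4).toNat := by
    rw [hheight, Int.fdiv_eq_ediv_of_nonneg _ (by norm_num)]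
    norm_num
    omega
  have h2 : boxHeight k (fun j => if j < k then a j else 0) 4 2 =
      (1 - Int.fdiv (1 - (d1 : ℤ) - (d3 : ℤ)) 2).toNat := by
    rw [hheight, Int.fdiv_eq_ediv_of_nonneg _ (by norm_num)]
    norm_num
    omega
  have h3 : boxHeight k (fun j => if j < k then a j else 0) 4 3 =
      (1 - Int.fdiv (1 - (d1 : ℤ) - 2 * (d2 : ℤ) - 3 * (d3 : ℤ)) 4).toNat := by
    rw [hheight, Int.fdiv_eq_ediv_of_nonneg _ (by norm_num)]
    norm_num
    omega
  rw [h0, h1, h2, h3, pow_zero]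
  ring
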